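/- Let β = √((5+√17)/2). Then the 3×3 real matrix [[2(β²−2)/(β⁴+4), −2(β²−2)²/(β⁴+4), −√((β²−2)³/(β⁴+4))], [−2(β²−2)²/(β⁴+4), −2(7β²+2)/((β²−1)(β⁴+4)), (2/β²)·√((β²−2)³/(β⁴+4))], [−√((β²−2)³/(β⁴+4)), (2/β²)·√((β²−2)³/(β⁴+4)), −2/β²]] is symmetric and orthogonal; in particular its square is the 3×3 identity matrix. -/

import Mathlib

/-!
Write `x = β²`, so that `x² - 5 x + 2 = 0`. The matrix `U + 1` has rank one: it is a multiple of
`v vᵀ`, where `v` is its third column. Hence `U` is the half-turn `2 v vᵀ / (v ⬝ v) - 1` as soon as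
`v ⬝ v = 2 (1 - 2 / x)`, and this normalization, which amounts to `(x - 2) (x - 1) = 2 x`, is the
quadratic equation of `x`.
-/

namespace AsaedaHaagerupStmt14

noncomputable def beta : ℝ := Real.sqrt ((5 + Real.sqrt 17) / 2)

noncomputable def U : Matrix (Fin 3) (Fin 3) ℝ :=
  !![2 * (beta ^ 2 - 2) / (beta ^ 4 + 4),
       -(2 * (beta ^ 2 - 2) ^ 2 / (beta ^ 4 + 4)),
       -Real.sqrt ((beta ^ 2 - 2) ^ 3 / (beta ^ 4 + 4));
     -(2 * (beta ^ 2 - 2) ^ 2 / (beta ^ 4 + 4)),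
       -(2 * (7 * beta ^ 2 + 2) / ((beta ^ 2 - 1) * (beta ^ 4 + 4))),
       (2 / beta ^ 2) * Real.sqrt ((beta ^ 2 - 2) ^ 3 / (beta ^ 4 + 4));
     -Real.sqrt ((beta ^ 2 - 2) ^ 3 / (beta ^ 4 + 4)),
       (2 / beta ^ 2) * Real.sqrt ((beta ^ 2 - 2) ^ 3 / (beta ^ 4 + 4)),
       -(2 / beta ^ 2)]

open Matrix

section HalfTurn

variable {n K : Type*} [Fintype n] [DecidableEq n] [Field K]

/-- The half-turn `2 v vᵀ / (v ⬝ v) - 1` about the line spanned by `v`: it fixes `v` and acts as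
`-1` on the orthogonal complement of `v`. When `v ⬝ v = 0` the quotient is zero by convention, and
the value is `-1`. -/
def halfTurn (v : n → K) : Matrix n n K :=
  (2 / (v ⬝ᵥ v)) • vecMulVec v v - 1

theorem isSymm_halfTurn (v : n → K) : (halfTurn v).IsSymm :=
  (IsSymm.smul (transpose_vecMulVec v v) _).sub isSymm_one

theorem halfTurn_mul_self (v : n → K) : halfTurn v * halfTurn v = 1 := by
  have hv : 2 / (v ⬝ᵥ v) * (2 / (v ⬝ᵥ v)) * (v ⬝ᵥ v) = 2 / (v ⬝ᵥ v) + 2 / (v ⬝ᵥ v) := by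
    by_cases h : v ⬝ᵥ v = 0
    · simp [h]
    · rw [mul_assoc, div_mul_cancel₀ 2 h, mul_two]
  have hsq : (2 / (v ⬝ᵥ v)) • vecMulVec v v * (2 / (v ⬝ᵥ v)) • vecMulVec v v =
      (2 / (v ⬝ᵥ v)) • vecMulVec v v + (2 / (v ⬝ᵥ v)) • vecMulVec v v := by
    rw [smul_mul_smul_comm, vecMulVec_mul_vecMulVec, vecMulVec_smul, smul_smul, hv, add_smul]
  rw [halfTurn, sub_mul, mul_sub, hsq, one_mul, mul_one]
  abel

theorem halfTurn_mem_orthogonalGroup (v : n → K) : halfTurn v ∈ orthogonalGroup n K := by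
  rw [mem_orthogonalGroup_iff, (isSymm_halfTurn v).eq, halfTurn_mul_self]

end HalfTurn

theorem beta_sq : beta ^ 2 = (5 + √17) / 2 :=
  Real.sq_sqrt (by positivity)

theorem beta_pow_four : beta ^ 4 = 5 * beta ^ 2 - 2 := by
  have h17 : √17 ^ 2 = 17 := Real.sq_sqrt (by norm_num)
  calc beta ^ 4 = (beta ^ 2) ^ 2 := by ring
    _ = 5 * beta ^ 2 - 2 := by
        rw [beta_sq]
        linear_combination h17 / 4

theorem two_lt_beta_sq : 2 < beta ^ 2 := by
  rw [beta_sq]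
  linarith [Real.sqrt_nonneg 17]

theorem beta_pos : 0 < beta :=
  Real.sqrt_pos.2 (by positivity)

/-- The common factor of the off-diagonal entries in the third column of `U`. -/
noncomputable def corner : ℝ := √((beta ^ 2 - 2) ^ 3 / (beta ^ 4 + 4))

theorem corner_sq : corner ^ 2 = (beta ^ 2 - 2) ^ 3 / (beta ^ 4 + 4) :=
  have := sub_pos.2 two_lt_beta_sq
  Real.sq_sqrt (by positivity)

/-- The third column of `U + 1`, which spans the line fixed by `U`. -/
noncomputable def axis : Fin 3 → ℝ :=
  ![-corner, 2 / beta ^ 2 * corner, 1 - 2 / beta ^ 2]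

theorem axis_dotProduct_self : axis ⬝ᵥ axis = 2 * (1 - 2 / beta ^ 2) := by
  have hβ := beta_pos
  calc axis ⬝ᵥ axis
      = (1 + 4 / beta ^ 4) * corner ^ 2 + (1 - 2 / beta ^ 2) ^ 2 := by
        simp only [axis, dotProduct, Fin.sum_univ_three, cons_val]
        ring
    _ = (beta ^ 2 - 2) ^ 2 * (beta ^ 2 - 1) / beta ^ 4 := by
        rw [corner_sq]
        field_simp
        ring
    _ = 2 * (1 - 2 / beta ^ 2) := by
        field_simp
        linear_combination (beta ^ 2 - 2) * beta_pow_four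

theorem smul_U_add_one : (1 - 2 / beta ^ 2) • (U + 1) = vecMulVec axis axis := by
  have hβ := beta_pos
  have hβ1 : beta ^ 2 - 1 ≠ 0 := by linarith [two_lt_beta_sq]
  have h00 : (1 - 2 / beta ^ 2) * (2 * (beta ^ 2 - 2) / (beta ^ 4 + 4) + 1) = corner ^ 2 := by
    rw [corner_sq]
    field_simp
    linear_combination -(beta ^ 2 - 2) * beta ^ 2 * beta_pow_four
  have h01 : (1 - 2 / beta ^ 2) * -(2 * (beta ^ 2 - 2) ^ 2 / (beta ^ 4 + 4)) =
      -corner * (2 / beta ^ 2 * corner) := by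
    rw [neg_mul, mul_left_comm, ← sq, corner_sq]
    field_simp
  have h11 : (1 - 2 / beta ^ 2) *
      (-(2 * (7 * beta ^ 2 + 2) / ((beta ^ 2 - 1) * (beta ^ 4 + 4))) + 1) =
      (2 / beta ^ 2 * corner) ^ 2 := by
    rw [mul_pow, corner_sq]
    field_simp
    linear_combination (beta ^ 2 - 2) * (beta ^ 4 + 8) * beta_pow_four
  rw [U, ← corner, axis]
  ext i j
  fin_cases i <;> fin_cases j <;> simp [vecMulVec_apply] <;> grind

theorem U_eq_halfTurn_axis : U = halfTurn axis := by
  have hc : 1 - 2 / beta ^ 2 ≠ 0 :=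
    (sub_pos.2 ((div_lt_one (pow_pos beta_pos 2)).2 two_lt_beta_sq)).ne'
  have hscale : 2 / (2 * (1 - 2 / beta ^ 2)) * (1 - 2 / beta ^ 2) = 1 := by
    field_simp
  rw [halfTurn, axis_dotProduct_self, ← smul_U_add_one, smul_smul, hscale, one_smul,
    add_sub_cancel_right]

theorem asaeda_haagerup_stmt14 :
    U.IsSymm ∧ U ∈ Matrix.orthogonalGroup (Fin 3) ℝ ∧ U * U = 1 := by
  rw [U_eq_halfTurn_axis]
  exact ⟨isSymm_halfTurn axis, halfTurn_mem_orthogonalGroup axis, halfTurn_mul_self axis⟩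

end AsaedaHaagerupStmt14
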